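/- arXiv:2605.30600 — 7 statements merged into one kernel-verified Lean document; each statement's English description precedes it below -/
import Mathlib

section
/- Deterministic core of the privacy lemma for the fast mixing mechanism: Let Z be a real k×d matrix, let σ > 0, and let x ∈ ℝ^d, u ∈ ℝ^k satisfy ‖x‖ ≤ 1 and ‖u‖ ≤ 1. Set M := (ZᵀZ + σ²I_d)⁻¹, δ := Zᵀu − x, s₁ := xᵀMx, s₂ := uᵀZMZᵀu, c := −xᵀMZᵀu, C² := 1 + 2‖δ‖, and γ := (λ_min(ZᵀZ) + σ²)/C². If γ > 25/8, then for every α with 1 < α < 8γ/25 the quantities 1 + s₁ + 2c + c² − s₁s₂ and 1 + α(s₁+2c) + α²(c² − s₁s₂) are strictly positive and (1/(2(α−1))) · log( (1 + s₁ + 2c + c² − s₁s₂)^α / (1 + α(s₁+2c) + α²(c² − s₁s₂)) ) ≤ 25α/(32γ²). -/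
/-!
Write `v = Zᵀu = x + δ`, `⟨p, q⟩ = pᵀMq`, `y = ⟨x, δ⟩` and `t = ⟨δ, δ⟩`. Then `c = -(s₁ + y)` and
`s₂ = s₁ + 2y + t`, so with `a = s₁ + 2c` and `D = s₁s₂ - c²` one has `D = s₁t - y²`, a Gram
determinant, hence `D ≥ 0`, and
`a² + 4D = s₁² + 4s₁y + 4s₁t`.
With `l = λ_min(ZᵀZ) + σ²` the form is bounded by `M ≤ l⁻¹ I` (`quadForm_inv_bounds`), so
`s₁ ≤ 1/l`, `t ≤ ‖δ‖²/l`, and `|y| ≤ ‖δ‖/l` by Cauchy–Schwarz (`form_cauchy_schwarz`). Therefore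
`a² + 4D ≤ (1 + 2‖δ‖)²/l² = 1/γ²`.

What remains, `scalar_bound`, concerns `P = 1 + a - D` and `W = 1 + αa - α²D`. Splitting
`log (P^α / W) = (α - 1) log P + log (P / W)` and applying `log z ≤ z - 1` to both terms gives
`α (α - 1) (a² + D - (α + 1)aD + αD²) / W`, whose factor `α - 1` cancels the prefactor. The
numerator is at most `a² + 4D ≤ γ⁻²`, and `W ≥ 17/25 ≥ 16/25` because `α/γ < 8/25`.
-/

open Matrix

noncomputable def norm2 {ι : Type*} [Fintype ι] (v : ι → ℝ) : ℝ :=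
  Real.sqrt (∑ i, v i ^ 2)

/-- Smallest eigenvalue of a Hermitian (symmetric) real matrix; junk value `0` otherwise. -/
noncomputable def lambdaMin {d : ℕ} (A : Matrix (Fin d) (Fin d) ℝ) : ℝ :=
  @dite _ A.IsHermitian (Classical.dec _) (fun h => ⨅ i, h.eigenvalues i) (fun _ => 0)

/-- The Rényi-type bound in scalar form: `a` stands for `s₁ + 2c`, `D` for `s₁s₂ - c²` and `g` for
`γ⁻¹`. The pair `(a, D)` enters only through `0 ≤ D` and `a² + 4D ≤ g²`. -/
theorem scalar_bound {α a D g : ℝ} (hα : 1 < α) (hg : 0 < g) (hαg : α * g < 8 / 25)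
    (hD : 0 ≤ D) (hb : a ^ 2 + 4 * D ≤ g ^ 2) :
    0 < 1 + a - D ∧ 0 < 1 + α * a - α ^ 2 * D ∧
      1 / (2 * (α - 1)) * Real.log ((1 + a - D) ^ α / (1 + α * a - α ^ 2 * D)) ≤
        25 * α / 32 * g ^ 2 := by
  -- The quadratic `1 + ta - t²D` is needed at both `t = 1` and `t = α`.
  have lower : ∀ t : ℝ, 0 < t → t * g < 8 / 25 → 17 / 25 ≤ 1 + t * a - t ^ 2 * D := by
    intro t ht htg
    have h0 : 0 < t * g := by positivity
    have h1 : (t * a) ^ 2 + 4 * (t ^ 2 * D) ≤ (t * g) ^ 2 := by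
      have := mul_le_mul_of_nonneg_left hb (sq_nonneg t)
      nlinarith
    have h2 : 0 ≤ t ^ 2 * D := by positivity
    have h3 : -(t * g) ≤ t * a := (abs_le_of_sq_le_sq' (by linarith) h0.le).1
    nlinarith
  have ha := abs_le_of_sq_le_sq' (show a ^ 2 ≤ g ^ 2 by linarith) hg.le
  have hP : 17 / 25 ≤ 1 + a - D := by
    have := lower 1 one_pos (by nlinarith)
    linarith
  have hW := lower α (by linarith) hαg
  set P := 1 + a - D with hPdef
  set W := 1 + α * a - α ^ 2 * D with hWdef
  have hP0 : 0 < P := by linarith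
  have hW0 : 0 < W := by linarith
  refine ⟨hP0, hW0, ?_⟩
  -- Bounding `α log P` by `α (P - 1)` directly would lose the factor `α - 1`.
  have hlog : Real.log (P ^ α / W) = (α - 1) * Real.log P + Real.log (P / W) := by
    rw [Real.log_div (Real.rpow_pos_of_pos hP0 α).ne' hW0.ne', Real.log_rpow hP0,
      Real.log_div hP0.ne' hW0.ne']
    ring
  have h1 : (α - 1) * Real.log P ≤ (α - 1) * (a - D) :=
    mul_le_mul_of_nonneg_left (by linarith [Real.log_le_sub_one_of_pos hP0]) (by linarith)
  have h2 := Real.log_le_sub_one_of_pos (div_pos hP0 hW0)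
  have key : a ^ 2 + D - (α + 1) * a * D + α * D ^ 2 ≤ g ^ 2 := by
    have e1 : -(α + 1) * a ≤ 1 := by nlinarith
    have e2 : α * D ≤ 1 := by nlinarith
    nlinarith [mul_le_mul_of_nonneg_right e1 hD, mul_le_mul_of_nonneg_right e2 hD]
  have h3 : (α - 1) * (a - D) + (P / W - 1) =
      (α - 1) * α * (a ^ 2 + D - (α + 1) * a * D + α * D ^ 2) / W := by
    rw [hPdef] at *
    field_simp
    rw [hWdef]
    ring
  have h4 : (α - 1) * α * (a ^ 2 + D - (α + 1) * a * D + α * D ^ 2) / W ≤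
      (α - 1) * α * (25 / 16 * g ^ 2) := by
    rw [div_le_iff₀ hW0, mul_assoc _ (25 / 16 * g ^ 2)]
    apply mul_le_mul_of_nonneg_left _ (by nlinarith)
    nlinarith [sq_nonneg g]
  rw [one_div, inv_mul_le_iff₀ (by linarith), hlog]
  nlinarith

theorem norm2_nonneg {ι : Type*} [Fintype ι] (v : ι → ℝ) : 0 ≤ norm2 v := Real.sqrt_nonneg _

theorem dotProduct_self_eq_norm2_sq {ι : Type*} [Fintype ι] (v : ι → ℝ) :
    v ⬝ᵥ v = norm2 v ^ 2 := by
  rw [norm2, Real.sq_sqrt (Finset.sum_nonneg fun i _ => sq_nonneg _)]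
  simp [dotProduct, sq]

theorem dotProduct_sq_le {n : Type*} [Fintype n] (v w : n → ℝ) :
    (v ⬝ᵥ w) ^ 2 ≤ (v ⬝ᵥ v) * (w ⬝ᵥ w) := by
  simpa only [dotProduct, sq] using Finset.sum_mul_sq_le_sq_mul_sq Finset.univ v w

/-- If `N ≥ l I` as quadratic forms, then `0 ≤ N⁻¹ ≤ l⁻¹ I`. With `y = N⁻¹w` one has
`wᵀN⁻¹w = yᵀNy ≥ l ‖y‖²`, and Cauchy–Schwarz for `wᵀy` does the rest. -/
theorem quadForm_inv_bounds {d : ℕ} {N : Matrix (Fin d) (Fin d) ℝ} {l : ℝ} (hl : 0 < l)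
    (hN : ∀ w : Fin d → ℝ, l * (w ⬝ᵥ w) ≤ w ⬝ᵥ N *ᵥ w) (w : Fin d → ℝ) :
    0 ≤ w ⬝ᵥ N⁻¹ *ᵥ w ∧ l * (w ⬝ᵥ N⁻¹ *ᵥ w) ≤ w ⬝ᵥ w := by
  have hself : ∀ v : Fin d → ℝ, 0 ≤ v ⬝ᵥ v := fun v => by
    rw [dotProduct_self_eq_norm2_sq]; positivity
  have hdet : IsUnit N.det := by
    rw [isUnit_iff_ne_zero]
    intro h0
    obtain ⟨v, hv, hv0⟩ := exists_mulVec_eq_zero_iff.mpr h0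
    have h1 := hN v
    rw [hv0, dotProduct_zero] at h1
    exact hv (dotProduct_self_eq_zero.mp (by nlinarith [hself v]))
  set y := N⁻¹ *ᵥ w with hy
  have hNy : N *ᵥ y = w := by rw [hy, mulVec_mulVec, mul_nonsing_inv _ hdet, one_mulVec]
  have h1 := hN y
  rw [hNy, dotProduct_comm y w] at h1
  have h0 : 0 ≤ w ⬝ᵥ y := le_trans (mul_nonneg hl.le (hself y)) h1
  refine ⟨h0, ?_⟩
  rcases h0.eq_or_lt with h | h
  · rw [← h]; simpa using hself w
  · have h2 := dotProduct_sq_le w y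
    have h3 := mul_le_mul_of_nonneg_left h1 (hself w)
    nlinarith

/-- Cauchy–Schwarz for a positive semidefinite bilinear form. -/
theorem form_cauchy_schwarz {d : ℕ} {M : Matrix (Fin d) (Fin d) ℝ} (hM : Mᵀ = M)
    (h0 : ∀ w : Fin d → ℝ, 0 ≤ w ⬝ᵥ M *ᵥ w) (v w : Fin d → ℝ) :
    (v ⬝ᵥ M *ᵥ w) ^ 2 ≤ (v ⬝ᵥ M *ᵥ v) * (w ⬝ᵥ M *ᵥ w) := by
  have hsymm : w ⬝ᵥ M *ᵥ v = v ⬝ᵥ M *ᵥ w := by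
    rw [dotProduct_mulVec, ← mulVec_transpose, hM, dotProduct_comm]
  have h := discrim_le_zero (a := w ⬝ᵥ M *ᵥ w) (b := 2 * (v ⬝ᵥ M *ᵥ w))
    (c := v ⬝ᵥ M *ᵥ v) fun t => by
      have := h0 (v + t • w)
      simp only [mulVec_add, mulVec_smul, dotProduct_add, add_dotProduct, smul_dotProduct,
        dotProduct_smul, smul_eq_mul, hsymm] at this
      linarith
  rw [discrim] at h
  linarith

/-- Rayleigh bound: the smallest eigenvalue bounds the quadratic form from below. For `d = 0` the
infimum is the junk value `0`, and both sides vanish. -/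
theorem iInf_eigenvalues_mul_le {d : ℕ} {A : Matrix (Fin d) (Fin d) ℝ} (h : A.IsHermitian) (w : Fin d → ℝ) :
    (⨅ i, h.eigenvalues i) * (w ⬝ᵥ w) ≤ w ⬝ᵥ A *ᵥ w := by
  set U : Matrix (Fin d) (Fin d) ℝ := h.eigenvectorUnitary.1
  have hA : A = U * diagonal h.eigenvalues * Uᵀ := by
    conv_lhs => rw [h.spectral_theorem]
    rfl
  have hUU : U * Uᵀ = 1 := Unitary.coe_mul_star_self h.eigenvectorUnitary
  have e1 : w ⬝ᵥ w = (Uᵀ *ᵥ w) ⬝ᵥ (Uᵀ *ᵥ w) := by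
    rw [dotProduct_mulVec, vecMul_transpose, mulVec_mulVec, hUU, one_mulVec]
  have e2 : w ⬝ᵥ A *ᵥ w = (Uᵀ *ᵥ w) ⬝ᵥ diagonal h.eigenvalues *ᵥ (Uᵀ *ᵥ w) := by
    conv_lhs => rw [hA]
    rw [← mulVec_mulVec, ← mulVec_mulVec, dotProduct_mulVec, ← mulVec_transpose]
  rw [e1, e2]
  simp only [dotProduct, mulVec_diagonal, Finset.mul_sum]
  refine Finset.sum_le_sum fun i _ => ?_
  nlinarith [ciInf_le (Set.finite_range h.eigenvalues).bddBelow i, mul_self_nonneg ((Uᵀ *ᵥ w) i)]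

theorem stmt0 {k d : ℕ} (Z : Matrix (Fin k) (Fin d) ℝ) (σ : ℝ) (hσ : 0 < σ)
    (x : Fin d → ℝ) (u : Fin k → ℝ)
    (hx : norm2 x ≤ 1) (hu : norm2 u ≤ 1) :
    let M := (Zᵀ * Z + σ ^ 2 • (1 : Matrix (Fin d) (Fin d) ℝ))⁻¹
    let δ := Zᵀ.mulVec u - x
    let s₁ := x ⬝ᵥ M.mulVec x
    let s₂ := u ⬝ᵥ (Z * M * Zᵀ).mulVec u
    let c := -(x ⬝ᵥ (M * Zᵀ).mulVec u)
    let Csq := 1 + 2 * norm2 δ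
    let γ := (lambdaMin (Zᵀ * Z) + σ ^ 2) / Csq
    γ > 25 / 8 →
      ∀ α : ℝ, 1 < α → α < 8 * γ / 25 →
        0 < 1 + s₁ + 2 * c + c ^ 2 - s₁ * s₂ ∧
        0 < 1 + α * (s₁ + 2 * c) + α ^ 2 * (c ^ 2 - s₁ * s₂) ∧
        (1 / (2 * (α - 1))) *
            Real.log ((1 + s₁ + 2 * c + c ^ 2 - s₁ * s₂) ^ α /
              (1 + α * (s₁ + 2 * c) + α ^ 2 * (c ^ 2 - s₁ * s₂))) ≤
          25 * α / (32 * γ ^ 2) := by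
  intro M δ s₁ s₂ c Csq γ hγ α hα hαγ
  set N : Matrix (Fin d) (Fin d) ℝ := Zᵀ * Z + σ ^ 2 • 1 with hNdef
  set l : ℝ := lambdaMin (Zᵀ * Z) + σ ^ 2 with hl
  have hC : 0 < Csq := by
    have := norm2_nonneg δ
    change 0 < 1 + 2 * norm2 δ
    linarith
  have hγl : γ * Csq = l := div_mul_cancel₀ _ hC.ne'
  have hγ0 : 0 < γ := by linarith
  have hl0 : 0 < l := hγl ▸ mul_pos hγ0 hC
  have hherm : (Zᵀ * Z).IsHermitian := isHermitian_conjTranspose_mul_self Z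
  have hN : ∀ w : Fin d → ℝ, l * (w ⬝ᵥ w) ≤ w ⬝ᵥ N *ᵥ w := fun w => by
    have h := iInf_eigenvalues_mul_le hherm w
    rw [hl, lambdaMin, dif_pos hherm, hNdef, add_mulVec, smul_mulVec, one_mulVec,
      dotProduct_add, dotProduct_smul, smul_eq_mul]
    linarith
  have hMsymm : Mᵀ = M := by
    change (N⁻¹)ᵀ = N⁻¹
    rw [transpose_nonsing_inv]
    simp [hNdef, transpose_mul]
  have hMw := quadForm_inv_bounds hl0 hN
  have hv : Zᵀ *ᵥ u = x + δ := by simp [δ]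
  have hsymm : δ ⬝ᵥ M *ᵥ x = x ⬝ᵥ M *ᵥ δ := by
    rw [dotProduct_mulVec, ← mulVec_transpose, hMsymm, dotProduct_comm]
  set y := x ⬝ᵥ M *ᵥ δ with hy
  set t := δ ⬝ᵥ M *ᵥ δ with ht
  have hc : c = -(s₁ + y) := by
    change -(x ⬝ᵥ (M * Zᵀ) *ᵥ u) = _
    rw [← mulVec_mulVec, hv, mulVec_add, dotProduct_add]
  have hs₂ : s₂ = s₁ + 2 * y + t := by
    change u ⬝ᵥ (Z * M * Zᵀ) *ᵥ u = _
    rw [← mulVec_mulVec, ← mulVec_mulVec, dotProduct_mulVec, ← mulVec_transpose, hv, mulVec_add,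
      dotProduct_add, add_dotProduct, add_dotProduct, hsymm]
    change s₁ + y + (y + t) = _
    ring
  have hs₁ : 0 ≤ s₁ ∧ l * s₁ ≤ 1 := by
    refine ⟨(hMw x).1, (hMw x).2.trans ?_⟩
    rw [dotProduct_self_eq_norm2_sq]
    exact pow_le_one₀ (norm2_nonneg x) hx
  have htb : 0 ≤ t ∧ l * t ≤ norm2 δ ^ 2 :=
    ⟨(hMw δ).1, dotProduct_self_eq_norm2_sq δ ▸ (hMw δ).2⟩
  have hyst : y ^ 2 ≤ s₁ * t := form_cauchy_schwarz hMsymm (fun w => (hMw w).1) x δ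
  have hb : (s₁ + 2 * c) ^ 2 + 4 * (s₁ * s₂ - c ^ 2) ≤ γ⁻¹ ^ 2 := by
    have he := norm2_nonneg δ
    set e := norm2 δ
    have hst : (l * s₁) * (l * t) ≤ e ^ 2 := by
      calc (l * s₁) * (l * t) ≤ 1 * e ^ 2 :=
            mul_le_mul hs₁.2 htb.2 (mul_nonneg hl0.le htb.1) zero_le_one
        _ = e ^ 2 := one_mul _
    have hly : l * y ≤ e := by
      refine (abs_le_of_sq_le_sq' ?_ he).2
      nlinarith [mul_le_mul_of_nonneg_left hyst (sq_nonneg l)]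
    have hls : 0 ≤ l * s₁ := mul_nonneg hl0.le hs₁.1
    have hsy : (l * s₁) * (l * y) ≤ e := by
      calc (l * s₁) * (l * y) ≤ (l * s₁) * e := mul_le_mul_of_nonneg_left hly hls
        _ ≤ 1 * e := mul_le_mul_of_nonneg_right hs₁.2 he
        _ = e := one_mul _
    have hinv : γ⁻¹ = (1 + 2 * e) / l := inv_div _ _
    rw [hinv, div_pow, le_div_iff₀ (by positivity), hc, hs₂]
    nlinarith
  have hD : 0 ≤ s₁ * s₂ - c ^ 2 := by rw [hc, hs₂]; nlinarith
  have hαg : α * γ⁻¹ < 8 / 25 := by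
    rw [← div_eq_mul_inv, div_lt_iff₀ hγ0]; linarith
  obtain ⟨h1, h2, h3⟩ := scalar_bound hα (inv_pos.mpr hγ0) hαg hD hb
  have e1 : 1 + s₁ + 2 * c + c ^ 2 - s₁ * s₂ = 1 + (s₁ + 2 * c) - (s₁ * s₂ - c ^ 2) := by ring
  have e2 : 1 + α * (s₁ + 2 * c) + α ^ 2 * (c ^ 2 - s₁ * s₂) =
      1 + α * (s₁ + 2 * c) - α ^ 2 * (s₁ * s₂ - c ^ 2) := by ring
  rw [e1, e2]
  refine ⟨h1, h2, h3.trans_eq ?_⟩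
  field_simp
end

section
/- Optimization upper bound (Claim C.1): Let α > 1, let m, ℓ > 0 with 1 − m − ℓ > 0 and 1 − αm − α²ℓ > 0, and let M ∈ ℝ satisfy |M| ≤ m. Suppose (a, b, c) ∈ ℝ³ satisfies: −ℓ ≤ c² − ab ≤ 0; −m ≤ a + 2c ≤ M; 1 + a + 2c + c² − ab > 0; and 1 + α(a + 2c) + α²(c² − ab) > 0. Then log( (1 + a + 2c + c² − ab)^α / (1 + α(a + 2c) + α²(c² − ab)) ) ≤ log( (1 − m − ℓ)^α / (1 − αm − α²ℓ) ). -/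
/-!
Put `x = a + 2c ∈ [-m, m]` and `y = c² - ab ∈ [-ℓ, 0]`. The ratio
`(1 + x + y)^α / (1 + αx + α²y)` is to be maximised at the corner `(-m, -ℓ)`. It is decreasing in
`y`, so `y` may be lowered to `-ℓ`. On that edge it is not monotone in `x`, but it is decreasing
for `x ≤ 0`, and its value at `x > 0` is at most its value at `-x`. Both monotonicity facts come
from Bernoulli's inequality (`ratio_le_of_bernoulli`); the reflection amounts to
`α · artanh u ≤ artanh v` whenever `α u ≤ v`, read off termwise from the power series
(`mul_log_sub_log_le`).
-/

/-- Replacing the base `P` and the denominator `Q` by new values `P'` and `Q'` does not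
decrease `P ^ α / Q`, provided that the relative decrease of `Q` is at least `α` times that of `P`. -/
lemma ratio_le_of_bernoulli {α P P' Q Q' : ℝ} (hα : 1 ≤ α) (hP : 0 < P) (hP' : 0 < P')
    (hQ : 0 < Q) (hQ' : 0 < Q') (h : α * (P - P') * Q ≤ (Q - Q') * P) :
    P ^ α / Q ≤ P' ^ α / Q' := by
  have hs : (-1 : ℝ) ≤ P' / P - 1 := by
    have := (div_pos hP' hP).le
    linarith
  have hb := one_add_mul_self_le_rpow_one_add hs hα
  rw [add_sub_cancel, Real.div_rpow hP'.le hP.le] at hb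
  have hq : Q' / Q ≤ 1 + α * (P' / P - 1) := by
    rw [div_le_iff₀ hQ, ← sub_nonneg]
    have e : (1 + α * (P' / P - 1)) * Q - Q' = ((Q - Q') * P - α * (P - P') * Q) / P := by
      field_simp
      ring
    rw [e]
    exact div_nonneg (by linarith) hP.le
  have hPa : 0 < P ^ α := Real.rpow_pos_of_pos hP α
  have h3 := hq.trans hb
  rw [div_le_div_iff₀ hQ hPa] at h3
  rw [div_le_div_iff₀ hQ hQ']
  linarith

/-- Superlinearity of `artanh`, where `log (1 + u) - log (1 - u) = 2 artanh u`. -/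
lemma mul_log_sub_log_le {α u v : ℝ} (hα : 1 ≤ α) (hu : 0 ≤ u) (huv : α * u ≤ v) (hv : v < 1) :
    α * (Real.log (1 + u) - Real.log (1 - u)) ≤ Real.log (1 + v) - Real.log (1 - v) := by
  have huv' : u ≤ v := by nlinarith
  have hsu := (Real.hasSum_log_sub_log_of_abs_lt_one
    (x := u) (by rw [abs_of_nonneg hu]; linarith)).mul_left α
  have hsv := Real.hasSum_log_sub_log_of_abs_lt_one
    (x := v) (by rw [abs_of_nonneg (hu.trans huv')]; exact hv)
  refine hasSum_le (fun k => ?_) hsu hsv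
  have h1 : α * u ^ (2 * k + 1) ≤ v ^ (2 * k + 1) := by
    calc α * u ^ (2 * k + 1) ≤ α ^ (2 * k + 1) * u ^ (2 * k + 1) := by
          gcongr
          exact le_self_pow₀ hα (by omega)
      _ = (α * u) ^ (2 * k + 1) := by rw [mul_pow]
      _ ≤ v ^ (2 * k + 1) := by gcongr
  have h2 : (0 : ℝ) ≤ 2 * (1 / (2 * k + 1)) := by positivity
  nlinarith [mul_le_mul_of_nonneg_left h1 h2]

/-- Reflecting `x ≥ 0` to `-x` on the edge `y = -ℓ` does not decrease the ratio. -/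
lemma ratio_le_reflect {α ℓ x : ℝ} (hα : 1 < α) (hℓ : 0 < ℓ) (hx : 0 ≤ x)
    (h1 : 0 < 1 - x - ℓ) (h2 : 0 < 1 - α * x - α ^ 2 * ℓ) :
    (1 + x - ℓ) ^ α / (1 + α * x - α ^ 2 * ℓ) ≤ (1 - x - ℓ) ^ α / (1 - α * x - α ^ 2 * ℓ) := by
  have hα0 : 0 < α := by linarith
  have hax : 0 ≤ α * x := by positivity
  have hp : 0 < 1 - ℓ := by linarith
  have hq : 0 < 1 - α ^ 2 * ℓ := by linarith
  have hpq : 1 - α ^ 2 * ℓ ≤ 1 - ℓ := by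
    have : 1 * ℓ ≤ α ^ 2 * ℓ := by
      gcongr
      exact one_le_pow₀ hα.le
    linarith
  have hA : 0 < 1 + x - ℓ := by linarith
  have hB : 0 < 1 + α * x - α ^ 2 * ℓ := by linarith
  have key := mul_log_sub_log_le (α := α) (u := x / (1 - ℓ)) (v := α * x / (1 - α ^ 2 * ℓ)) hα.le
    (by positivity)
    (by
      rw [← mul_div_assoc]
      gcongr)
    (by
      rw [div_lt_one hq]
      linarith)
  have e1 : 1 + x / (1 - ℓ) = (1 + x - ℓ) / (1 - ℓ) := by field_simp; ring
  have e2 : 1 - x / (1 - ℓ) = (1 - x - ℓ) / (1 - ℓ) := by field_simp; ring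
  have e3 : 1 + α * x / (1 - α ^ 2 * ℓ) = (1 + α * x - α ^ 2 * ℓ) / (1 - α ^ 2 * ℓ) := by
    rw [eq_div_iff hq.ne', add_mul, div_mul_cancel₀ _ hq.ne']; ring
  have e4 : 1 - α * x / (1 - α ^ 2 * ℓ) = (1 - α * x - α ^ 2 * ℓ) / (1 - α ^ 2 * ℓ) := by
    rw [eq_div_iff hq.ne', sub_mul, div_mul_cancel₀ _ hq.ne']; ring
  rw [e1, e2, e3, e4, Real.log_div hA.ne' hp.ne', Real.log_div h1.ne' hp.ne',
    Real.log_div hB.ne' hq.ne', Real.log_div h2.ne' hq.ne'] at key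
  have hA' := Real.rpow_pos_of_pos hA α
  have h1' := Real.rpow_pos_of_pos h1 α
  rw [← Real.log_le_log_iff (by positivity) (by positivity), Real.log_div hA'.ne' hB.ne',
    Real.log_div h1'.ne' h2.ne', Real.log_rpow hA, Real.log_rpow h1]
  linarith

/-- On the edge `y = -ℓ`, moving from `-t` down to `-m` does not decrease the ratio. -/
lemma ratio_le_corner {α m ℓ t : ℝ} (hα : 1 < α) (hℓ : 0 < ℓ) (ht : 0 ≤ t) (htm : t ≤ m)
    (h1 : 0 < 1 - m - ℓ) (h2 : 0 < 1 - α * m - α ^ 2 * ℓ) :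
    (1 - t - ℓ) ^ α / (1 - α * t - α ^ 2 * ℓ) ≤ (1 - m - ℓ) ^ α / (1 - α * m - α ^ 2 * ℓ) := by
  have hat : α * t ≤ α * m := by gcongr
  refine ratio_le_of_bernoulli hα.le (by linarith) h1 (by linarith) h2 ?_
  have hd : 0 ≤ α * (m - t) := mul_nonneg (by linarith) (by linarith)
  have hQP : 1 - α * t - α ^ 2 * ℓ ≤ 1 - t - ℓ := by
    have : 1 * ℓ ≤ α ^ 2 * ℓ := by
      gcongr
      exact one_le_pow₀ hα.le
    nlinarith
  nlinarith [mul_le_mul_of_nonneg_left hQP hd]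

theorem stmt1 (α m ℓ M a b c : ℝ) (hα : 1 < α) (hm : 0 < m) (hℓ : 0 < ℓ)
    (h1 : 0 < 1 - m - ℓ) (h2 : 0 < 1 - α * m - α ^ 2 * ℓ) (hM : |M| ≤ m)
    (hc1 : -ℓ ≤ c ^ 2 - a * b) (hc2 : c ^ 2 - a * b ≤ 0)
    (hc3 : -m ≤ a + 2 * c) (hc4 : a + 2 * c ≤ M)
    (hpos1 : 0 < 1 + (a + 2 * c) + (c ^ 2 - a * b))
    (hpos2 : 0 < 1 + α * (a + 2 * c) + α ^ 2 * (c ^ 2 - a * b)) :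
    Real.log ((1 + (a + 2 * c) + (c ^ 2 - a * b)) ^ α /
        (1 + α * (a + 2 * c) + α ^ 2 * (c ^ 2 - a * b))) ≤
      Real.log ((1 - m - ℓ) ^ α / (1 - α * m - α ^ 2 * ℓ)) := by
  have hxm : a + 2 * c ≤ m := hc4.trans ((le_abs_self M).trans hM)
  generalize a + 2 * c = x at *
  generalize c ^ 2 - a * b = y at *
  have hα0 : 0 < α := by linarith
  have hpow := Real.rpow_pos_of_pos hpos1 α
  refine Real.log_le_log (by positivity) ?_
  have hax : α * -m ≤ α * x := by gcongr
  have step : (1 + x + y) ^ α / (1 + α * x + α ^ 2 * y) ≤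
      (1 + x - ℓ) ^ α / (1 + α * x - α ^ 2 * ℓ) := by
    refine ratio_le_of_bernoulli hα.le hpos1 (by linarith) hpos2 (by linarith) ?_
    have hd : 0 ≤ α * (y + ℓ) := mul_nonneg hα0.le (by linarith)
    have hy : α * (α - 1) * y ≤ 0 :=
      mul_nonpos_of_nonneg_of_nonpos (mul_nonneg hα0.le (by linarith)) hc2
    have hQP : 1 + α * x + α ^ 2 * y ≤ α * (1 + x + y) := by nlinarith
    nlinarith [mul_le_mul_of_nonneg_left hQP hd]
  refine step.trans ?_
  rcases le_total 0 x with hx | hx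
  · have haxm : α * x ≤ α * m := by gcongr
    exact (ratio_le_reflect hα hℓ hx (by linarith) (by linarith)).trans
      (ratio_le_corner hα hℓ hx hxm h1 h2)
  · have h := ratio_le_corner (t := -x) hα hℓ (by linarith) (by linarith) h1 h2
    simpa only [mul_neg, sub_neg_eq_add] using h
end

section
/- Log-ratio comparison inequality (Claim C.2): For every real x > 5/4 and every α with 1 < α < 4x/5, the quantities 1 − 1/x − 1/(4x²), 1 − α/x − α²/(4x²), 1 − 5/(4x), and 1 − 5α/(4x) are all strictly positive, and α·log(1 − 1/x − 1/(4x²)) − log(1 − α/x − α²/(4x²)) ≤ α·log(1 − 5/(4x)) − log(1 − 5α/(4x)). -/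
/-!
Put `t = 1 / x` and `r s = (1 - 5 s / 4) / (1 - s - s² / 4)`, so that the claim reads
`log (r (α t)) ≤ α log (r t)`. Since `1 - r s = s (1 - s) / (4 - 4 s - s²)`, the quotient
`(1 - r s) / s = 1 / (4 - s² / (1 - s))` increases with `s`, whence `r (α t) ≤ 1 - α (1 - r t)`
(`ratio_le`). Bernoulli's inequality `1 + α (r t - 1) ≤ (r t) ^ α` then finishes the proof.
-/

theorem quad_pos {s : ℝ} (h0 : 0 < s) (h1 : s < 4 / 5) : 0 < 1 - s - s ^ 2 / 4 := by
  nlinarith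

/-- The ratio at `α t` lies below the value at `α` of the affine function with value `1` at `0`
and `r t` at `1`. -/
theorem ratio_le {t α : ℝ} (ht : 0 < t) (hα : 1 < α) (hs : α * t < 4 / 5) :
    (1 - 5 * (α * t) / 4) / (1 - α * t - (α * t) ^ 2 / 4) ≤
      1 + α * ((1 - 5 * t / 4) / (1 - t - t ^ 2 / 4) - 1) := by
  have hta : t < α * t := by nlinarith
  have hf := quad_pos ht (hta.trans hs)
  have hg := quad_pos (ht.trans hta) hs
  have e : 1 + α * ((1 - 5 * t / 4) / (1 - t - t ^ 2 / 4) - 1) =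
      (1 - t - t ^ 2 / 4 - α * (t * (1 - t) / 4)) / (1 - t - t ^ 2 / 4) := by
    rw [eq_div_iff hf.ne', add_mul, mul_assoc, sub_mul, div_mul_cancel₀ _ hf.ne']
    ring
  rw [e, div_le_div_iff₀ hg hf]
  -- Cross-multiplied monotonicity of `s² / (1 - s)` between `t` and `α t`.
  have key : 0 ≤ (α * t) ^ 2 * (1 - t) - t ^ 2 * (1 - α * t) := by
    have h1 : t ^ 2 ≤ (α * t) ^ 2 := by gcongr
    nlinarith [mul_le_mul_of_nonneg_right h1 (by linarith : (0 : ℝ) ≤ 1 - t),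
      mul_pos (pow_pos ht 2) (sub_pos.2 hta)]
  have := mul_nonneg (ht.trans hta).le key
  linarith

theorem stmt2 (x α : ℝ) (hx : 5 / 4 < x) (hα1 : 1 < α) (hα2 : α < 4 * x / 5) :
    (0 < 1 - 1 / x - 1 / (4 * x ^ 2) ∧ 0 < 1 - α / x - α ^ 2 / (4 * x ^ 2) ∧
      0 < 1 - 5 / (4 * x) ∧ 0 < 1 - 5 * α / (4 * x)) ∧
    α * Real.log (1 - 1 / x - 1 / (4 * x ^ 2)) -
        Real.log (1 - α / x - α ^ 2 / (4 * x ^ 2)) ≤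
      α * Real.log (1 - 5 / (4 * x)) - Real.log (1 - 5 * α / (4 * x)) := by
  have hx0 : 0 < x := by linarith
  obtain ⟨t, rfl⟩ : ∃ t, x = t⁻¹ := ⟨x⁻¹, (inv_inv x).symm⟩
  have ht : 0 < t := inv_pos.1 hx0
  have hs : α * t < 4 / 5 := by
    have := mul_lt_mul_of_pos_right hα2 ht
    field_simp at this ⊢
    linarith
  have hta : t < α * t := by nlinarith
  have e1 : 1 - 1 / t⁻¹ - 1 / (4 * t⁻¹ ^ 2) = 1 - t - t ^ 2 / 4 := by field_simp
  have e2 : 1 - α / t⁻¹ - α ^ 2 / (4 * t⁻¹ ^ 2) = 1 - α * t - (α * t) ^ 2 / 4 := by field_simp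
  have e3 : 1 - 5 / (4 * t⁻¹) = 1 - 5 * t / 4 := by field_simp
  have e4 : 1 - 5 * α / (4 * t⁻¹) = 1 - 5 * (α * t) / 4 := by field_simp
  rw [e1, e2, e3, e4]
  have p1 := quad_pos ht (hta.trans hs)
  have p2 := quad_pos (ht.trans hta) hs
  have p3 : 0 < 1 - 5 * t / 4 := by linarith
  have p4 : 0 < 1 - 5 * (α * t) / 4 := by linarith
  refine ⟨⟨p1, p2, p3, p4⟩, ?_⟩
  have hr := div_pos p3 p1
  have hB := one_add_mul_self_le_rpow_one_add
    (s := (1 - 5 * t / 4) / (1 - t - t ^ 2 / 4) - 1) (by linarith) hα1.le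
  rw [add_sub_cancel] at hB
  have hlog := Real.log_le_log (div_pos p4 p2) ((ratio_le ht hα1 hs).trans hB)
  rw [Real.log_rpow hr, Real.log_div p4.ne' p2.ne', Real.log_div p3.ne' p1.ne'] at hlog
  linarith
end

section
/- Convexity claim: The function g(z) := log(1 − z − z²/4) − log(1 − 5z/4) is well defined (both log arguments are strictly positive) and convex on the interval [0, 4/5); that is, for all z₁, z₂ ∈ [0, 4/5) and all t ∈ [0, 1], g(t·z₁ + (1−t)·z₂) ≤ t·g(z₁) + (1−t)·g(z₂). -/
/-- The function `g(z) = log(1 - z - z²/4) - log(1 - 5z/4)`. -/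
noncomputable def g (z : ℝ) : ℝ :=
  Real.log (1 - z - z ^ 2 / 4) - Real.log (1 - 5 * z / 4)

/-!
Convexity is proved through `g'' ≥ 0`. With `A = 1 - z - z²/4` and `B = 1 - 5z/4`,
`g'' = (25/16) / B² - (3/2 + z/2 + z²/8) / A²`, so the claim is the polynomial inequality
`(3/2 + z/2 + z²/8) B² ≤ (25/16) A²` of `g_second_deriv_poly`. The quartic `16` times the
difference of its two sides is concave, equal to `1` at `0` and to `1/25` at `4/5`; it is
therefore positive on the interval.
-/

lemma g_arg_pos {z : ℝ} (hz : z ∈ Set.Ico (0 : ℝ) (4 / 5)) :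
    0 < 1 - z - z ^ 2 / 4 ∧ 0 < 1 - 5 * z / 4 := by
  obtain ⟨h0, h1⟩ := hz
  constructor <;> nlinarith

lemma g_second_deriv_poly {z : ℝ} (hz : z ∈ Set.Ico (0 : ℝ) (4 / 5)) :
    (3 / 2 + z / 2 + z ^ 2 / 8) * (1 - 5 * z / 4) ^ 2 ≤
      25 / 16 * (1 - z - z ^ 2 / 4) ^ 2 := by
  obtain ⟨h0, h1⟩ := hz
  -- The quartic is its chord over `[0, 4/5]` plus `z (4/5 - z)` times a positive quadratic.
  have key : 25 / 16 * (1 - z - z ^ 2 / 4) ^ 2 -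
      (3 / 2 + z / 2 + z ^ 2 / 8) * (1 - 5 * z / 4) ^ 2 =
      ((1 - 6 / 5 * z) + z * (4 / 5 - z) * ((5 / 4 * z - 3 / 2) ^ 2 + 7 / 4)) / 16 := by
    ring
  have h2 : 0 ≤ z * (4 / 5 - z) * ((5 / 4 * z - 3 / 2) ^ 2 + 7 / 4) :=
    mul_nonneg (mul_nonneg h0 (by linarith)) (by positivity)
  linarith

lemma hasDerivAt_quadratic (z : ℝ) :
    HasDerivAt (fun x : ℝ => 1 - x - x ^ 2 / 4) (-1 - z / 2) z := by
  refine (((hasDerivAt_id z).const_sub 1).sub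
    ((hasDerivAt_pow 2 z).div_const 4)).congr_deriv ?_
  norm_num
  ring

lemma hasDerivAt_linear (z : ℝ) :
    HasDerivAt (fun x : ℝ => 1 - 5 * x / 4) (-5 / 4) z := by
  refine ((((hasDerivAt_id z).const_mul 5).div_const 4).const_sub 1).congr_deriv ?_
  norm_num

lemma g_hasDerivAt {z : ℝ} (hz : z ∈ Set.Ico (0 : ℝ) (4 / 5)) :
    HasDerivAt g ((-1 - z / 2) / (1 - z - z ^ 2 / 4) - (-5 / 4) / (1 - 5 * z / 4)) z :=
  ((hasDerivAt_quadratic z).log (g_arg_pos hz).1.ne').sub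
    ((hasDerivAt_linear z).log (g_arg_pos hz).2.ne')

lemma g_hasDerivAt_deriv {z : ℝ} (hz : z ∈ Set.Ico (0 : ℝ) (4 / 5)) :
    HasDerivAt
      (fun x : ℝ => (-1 - x / 2) / (1 - x - x ^ 2 / 4) - (-5 / 4) / (1 - 5 * x / 4))
      (25 / 16 / (1 - 5 * z / 4) ^ 2 -
        (3 / 2 + z / 2 + z ^ 2 / 8) / (1 - z - z ^ 2 / 4) ^ 2) z := by
  obtain ⟨hA, hB⟩ := g_arg_pos hz
  have hnum : HasDerivAt (fun x : ℝ => -1 - x / 2) (-(1 / 2)) z :=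
    ((hasDerivAt_id z).div_const 2).const_sub (-1)
  refine ((hnum.div (hasDerivAt_quadratic z) hA.ne').sub
    ((hasDerivAt_const z (-5 / 4 : ℝ)).div (hasDerivAt_linear z) hB.ne')).congr_deriv ?_
  ring

lemma g_convexOn : ConvexOn ℝ (Set.Ico (0 : ℝ) (4 / 5)) g := by
  refine convexOn_of_hasDerivWithinAt2_nonneg (convex_Ico _ _)
    (fun z hz => (g_hasDerivAt hz).continuousAt.continuousWithinAt)
    (fun z hz => (g_hasDerivAt (interior_subset hz)).hasDerivWithinAt)
    (fun z hz => (g_hasDerivAt_deriv (interior_subset hz)).hasDerivWithinAt)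
    (fun z hz => ?_)
  have hz' := interior_subset hz
  obtain ⟨hA, hB⟩ := g_arg_pos hz'
  rw [sub_nonneg, div_le_div_iff₀ (by positivity) (by positivity)]
  exact g_second_deriv_poly hz'

theorem stmt3 :
    (∀ z ∈ Set.Ico (0 : ℝ) (4 / 5), 0 < 1 - z - z ^ 2 / 4 ∧ 0 < 1 - 5 * z / 4) ∧
    (∀ z₁ ∈ Set.Ico (0 : ℝ) (4 / 5), ∀ z₂ ∈ Set.Ico (0 : ℝ) (4 / 5),
      ∀ t ∈ Set.Icc (0 : ℝ) 1,
        g (t * z₁ + (1 - t) * z₂) ≤ t * g z₁ + (1 - t) * g z₂) := by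
  refine ⟨fun z hz => g_arg_pos hz, fun z₁ h₁ z₂ h₂ t ht => ?_⟩
  exact g_convexOn.2 h₁ h₂ ht.1 (sub_nonneg.2 ht.2) (add_sub_cancel _ _)
end

section
/- Sensitivity of the maximal row-correction norm (Lemma E.2): Let X ∈ ℝ^{n×d} have rows x₁,…,x_n with ‖x_i‖ ≤ 1 for all i, and let S ∈ ℝ^{k×n} be any matrix. For i ∈ [n], define f_i(X) := ‖Xᵀ(SᵀS − I_n)e_i‖ (equivalently ‖XᵀSᵀSe_i − x_i‖). Then for every j ∈ [n], with X' := X − e_j x_jᵀ (the matrix obtained by zeroing out the j-th row of X), | max_{i∈[n]} f_i(X') − max_{i∈[n]} f_i(X) | ≤ max_{i,l∈[n]} | e_iᵀ(SᵀS − I_n)e_l |. -/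
/-!
Zeroing the `j`-th row of `X` changes the vector `Xᵀ Q e_i` by exactly `-Q j i • x_j`, whose
Euclidean norm is at most `|Q j i|` because `‖x_j‖ ≤ 1`. By the reverse triangle inequality each
norm moves by at most `max |Q|`, and taking the maximum over a finite index set is 1-Lipschitz for
the sup distance.
-/

open Matrix

theorem norm2_eq_norm {ι : Type*} [Fintype ι] (v : ι → ℝ) :
    norm2 v = ‖WithLp.toLp 2 v‖ := by
  simp [norm2, EuclideanSpace.norm_eq]

/-- The bound a rank-one perturbation `-c • w` with `‖w‖ ≤ 1` has on the Euclidean norm. -/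
theorem abs_norm2_sub_smul_sub_norm2_le {ι : Type*} [Fintype ι] (v w : ι → ℝ) (c : ℝ)
    (hw : norm2 w ≤ 1) : |norm2 (v - c • w) - norm2 v| ≤ |c| := by
  rw [norm2_eq_norm] at hw
  rw [norm2_eq_norm, norm2_eq_norm]
  refine (abs_norm_sub_norm_le _ _).trans ?_
  rw [← WithLp.toLp_sub, sub_sub_cancel_left, WithLp.toLp_neg, WithLp.toLp_smul, norm_neg,
    norm_smul, Real.norm_eq_abs]
  exact mul_le_of_le_one_right (abs_nonneg c) hw

theorem abs_ciSup_sub_ciSup_le {ι : Type*} [Finite ι] [Nonempty ι] (f g : ι → ℝ) (M : ℝ)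
    (h : ∀ i, |f i - g i| ≤ M) : |(⨆ i, f i) - ⨆ i, g i| ≤ M := by
  have hf : ∀ i, f i ≤ ⨆ i, f i := le_ciSup (Set.finite_range f).bddAbove
  have hg : ∀ i, g i ≤ ⨆ i, g i := le_ciSup (Set.finite_range g).bddAbove
  rw [abs_sub_le_iff, sub_le_iff_le_add, sub_le_iff_le_add]
  constructor
  · refine ciSup_le fun i => ?_
    linarith [(abs_sub_le_iff.1 (h i)).1, hg i]
  · refine ciSup_le fun i => ?_
    linarith [(abs_sub_le_iff.1 (h i)).2, hf i]

/-- Zeroing row `j` of `X` shifts the `i`-th column of `Xᵀ Q` by `-Q j i • x_j`. -/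
theorem zero_row_transpose_mul_mulVec_single {n d : ℕ} (X : Matrix (Fin n) (Fin d) ℝ)
    (Q : Matrix (Fin n) (Fin n) ℝ) (j i : Fin n) :
    ((X - vecMulVec (Pi.single j (1 : ℝ)) (X j))ᵀ * Q).mulVec (Pi.single i (1 : ℝ)) =
      (Xᵀ * Q).mulVec (Pi.single i (1 : ℝ)) - Q j i • X j := by
  ext a
  simp [Matrix.mul_apply, vecMulVec_apply, sub_mul, Finset.sum_sub_distrib, Pi.single_apply]
  exact mul_comm _ _

theorem stmt8 {n d k : ℕ} (X : Matrix (Fin n) (Fin d) ℝ)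
    (hX : ∀ i : Fin n, norm2 (X i) ≤ 1)
    (S : Matrix (Fin k) (Fin n) ℝ) (j : Fin n) :
    let X' := X - Matrix.vecMulVec (Pi.single j (1 : ℝ)) (X j)
    let Q : Matrix (Fin n) (Fin n) ℝ := Sᵀ * S - 1
    |(⨆ i : Fin n, norm2 ((X'ᵀ * Q).mulVec (Pi.single i (1 : ℝ)))) -
        (⨆ i : Fin n, norm2 ((Xᵀ * Q).mulVec (Pi.single i (1 : ℝ))))| ≤
      ⨆ i : Fin n, ⨆ l : Fin n, |Q i l| := by
  intro X' Q
  have : Nonempty (Fin n) := ⟨j⟩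
  refine abs_ciSup_sub_ciSup_le _ _ _ fun i => ?_
  rw [zero_row_transpose_mul_mulVec_single X Q j i]
  refine (abs_norm2_sub_smul_sub_norm2_le _ _ _ (hX j)).trans ?_
  exact (le_ciSup (f := fun l => |Q j l|) (Set.finite_range _).bddAbove i).trans
    (le_ciSup (f := fun i => ⨆ l, |Q i l|) (Set.finite_range _).bddAbove j)
end

section
/- Sensitivity of the minimal Gram eigenvalue under row removal (Lemma E.3): Let S ∈ ℝ^{k×n} satisfy ‖Se_i‖ ≤ 1 for all i ∈ [n], and let X ∈ ℝ^{n×d} have rows x₁,…,x_n with ‖x_i‖ ≤ 1 for all i. Set Z := SX, m := max_{i∈[n]} ‖ZᵀSe_i − x_i‖, and Λ := 2 − min_{i∈[n]} ‖Se_i‖². Then for every i ∈ [n], | λ_min( (Z − Se_i x_iᵀ)ᵀ(Z − Se_i x_iᵀ) ) − λ_min( ZᵀZ ) | ≤ Λ + 2m. -/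
/-!
Write `s = S eᵢ`, `x = xᵢ` and `y = Zᵀ s - x`. Expanding the Gram matrix shows that removing the
row changes the quadratic form of `ZᵀZ` at `v` by
`-((2 - ‖s‖²) ⟨x, v⟩² + 2 ⟨y, v⟩ ⟨x, v⟩)` (`gram_update`), which Cauchy–Schwarz bounds in absolute
value by `((2 - ‖s‖²) + 2 ‖y‖) ‖v‖²`, hence by `(Λ + 2m) ‖v‖²`. The minimal eigenvalue is the
minimum of the Rayleigh quotient, so it moves by at most `Λ + 2m` (`lambdaMin_le_of_form`).
-/

open Matrix

theorem norm2_sq {ι : Type*} [Fintype ι] (v : ι → ℝ) : norm2 v ^ 2 = v ⬝ᵥ v := by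
  unfold norm2
  rw [Real.sq_sqrt (Finset.sum_nonneg fun i _ => sq_nonneg _)]
  simp only [dotProduct, sq]

theorem abs_dotProduct_le {ι : Type*} [Fintype ι] (u v : ι → ℝ) :
    |u ⬝ᵥ v| ≤ norm2 u * norm2 v := by
  apply abs_le_of_sq_le_sq _ (mul_nonneg (norm2_nonneg u) (norm2_nonneg v))
  rw [mul_pow, norm2_sq, norm2_sq]
  have h := Finset.sum_mul_sq_le_sq_mul_sq Finset.univ u v
  simpa only [dotProduct, sq] using h

/-- The Rayleigh bound: the form of `A` in an orthonormal eigenbasis is a combination of the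
eigenvalues weighted by squared coordinates. -/
theorem lambdaMin_mul_le {d : ℕ} {A : Matrix (Fin d) (Fin d) ℝ} (hA : A.IsHermitian)
    (v : Fin d → ℝ) : lambdaMin A * (v ⬝ᵥ v) ≤ v ⬝ᵥ A *ᵥ v := by
  have hT : Aᵀ = A := by simpa [Matrix.IsHermitian, conjTranspose_eq_transpose_of_trivial] using hA
  have hl : lambdaMin A = ⨅ i, hA.eigenvalues i := by
    unfold lambdaMin
    exact dif_pos hA
  have expand : ∀ w : Fin d → ℝ, ∑ i, ((hA.eigenvectorBasis i).ofLp ⬝ᵥ v) *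
      ((hA.eigenvectorBasis i).ofLp ⬝ᵥ w) = v ⬝ᵥ w := by
    intro w
    have h := hA.eigenvectorBasis.sum_inner_mul_inner (WithLp.toLp 2 v) (WithLp.toLp 2 w)
    simpa [EuclideanSpace.inner_eq_star_dotProduct, dotProduct_comm] using h
  have hAv : ∀ i, (hA.eigenvectorBasis i).ofLp ⬝ᵥ (A *ᵥ v)
      = hA.eigenvalues i * ((hA.eigenvectorBasis i).ofLp ⬝ᵥ v) := by
    intro i
    rw [dotProduct_mulVec, ← mulVec_transpose, hT, hA.mulVec_eigenvectorBasis, smul_dotProduct,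
      smul_eq_mul]
  rw [← expand v, ← expand (A *ᵥ v), hl, Finset.mul_sum]
  refine Finset.sum_le_sum fun i _ => ?_
  rw [hAv]
  have := ciInf_le (Set.finite_range hA.eigenvalues).bddBelow i
  nlinarith [mul_self_nonneg ((hA.eigenvectorBasis i).ofLp ⬝ᵥ v)]

/-- The Rayleigh bound is attained at an eigenvector. -/
theorem exists_lambdaMin_eq {d : ℕ} [Nonempty (Fin d)] {A : Matrix (Fin d) (Fin d) ℝ}
    (hA : A.IsHermitian) : ∃ v : Fin d → ℝ, v ⬝ᵥ v = 1 ∧ v ⬝ᵥ A *ᵥ v = lambdaMin A := by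
  have hl : lambdaMin A = ⨅ i, hA.eigenvalues i := by
    unfold lambdaMin
    exact dif_pos hA
  obtain ⟨j, hj⟩ := exists_eq_ciInf_of_finite (f := hA.eigenvalues)
  have h1 : (hA.eigenvectorBasis j).ofLp ⬝ᵥ (hA.eigenvectorBasis j).ofLp = 1 := by
    have h := hA.eigenvectorBasis.inner_eq_one j
    rwa [EuclideanSpace.inner_eq_star_dotProduct, star_trivial] at h
  refine ⟨(hA.eigenvectorBasis j).ofLp, h1, ?_⟩
  rw [hA.mulVec_eigenvectorBasis, dotProduct_smul, h1, hl, hj, smul_eq_mul, mul_one]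

/-- One-sided Weyl inequality for the minimal eigenvalue: the form bound is tested at a minimal
eigenvector of `A`. -/
theorem lambdaMin_le_of_form {d : ℕ} {A B : Matrix (Fin d) (Fin d) ℝ} (hA : A.IsHermitian)
    (hB : B.IsHermitian) {c : ℝ} (hc : 0 ≤ c)
    (h : ∀ v, v ⬝ᵥ B *ᵥ v ≤ v ⬝ᵥ A *ᵥ v + c * (v ⬝ᵥ v)) :
    lambdaMin B ≤ lambdaMin A + c := by
  rcases isEmpty_or_nonempty (Fin d) with he | he
  · -- For `d = 0` both minima are infima over the empty set, and the matrices coincide.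
    rw [Subsingleton.elim B A]
    linarith
  · obtain ⟨v, hv, hvA⟩ := exists_lambdaMin_eq hA
    have h1 := lambdaMin_mul_le hB v
    have h2 := h v
    rw [hv] at h1 h2
    linarith

theorem gram_form {k d : ℕ} (Z : Matrix (Fin k) (Fin d) ℝ) (v : Fin d → ℝ) :
    v ⬝ᵥ (Zᵀ * Z) *ᵥ v = (Z *ᵥ v) ⬝ᵥ (Z *ᵥ v) := by
  rw [← mulVec_mulVec, dotProduct_mulVec, vecMul_transpose]

theorem gram_update {k d : ℕ} (Z : Matrix (Fin k) (Fin d) ℝ) (s : Fin k → ℝ) (x v : Fin d → ℝ) :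
    v ⬝ᵥ ((Z - vecMulVec s x)ᵀ * (Z - vecMulVec s x)) *ᵥ v = v ⬝ᵥ (Zᵀ * Z) *ᵥ v
      - ((2 - norm2 s ^ 2) * (x ⬝ᵥ v) ^ 2 + 2 * ((Zᵀ *ᵥ s - x) ⬝ᵥ v) * (x ⬝ᵥ v)) := by
  have h1 : (Z - vecMulVec s x) *ᵥ v = Z *ᵥ v - (x ⬝ᵥ v) • s := by
    rw [sub_mulVec, vecMulVec_mulVec]
    simp
  have h2 : (Zᵀ *ᵥ s) ⬝ᵥ v = s ⬝ᵥ Z *ᵥ v := by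
    rw [mulVec_transpose, dotProduct_mulVec]
  rw [gram_form, gram_form, h1, norm2_sq, sub_dotProduct (Zᵀ *ᵥ s), h2]
  simp only [sub_dotProduct, dotProduct_sub, smul_dotProduct, dotProduct_smul, smul_eq_mul,
    dotProduct_comm (Z *ᵥ v) s]
  ring

theorem stmt9 {n d k : ℕ} (S : Matrix (Fin k) (Fin n) ℝ)
    (hS : ∀ i : Fin n, norm2 (S.mulVec (Pi.single i (1 : ℝ))) ≤ 1)
    (X : Matrix (Fin n) (Fin d) ℝ) (hX : ∀ i : Fin n, norm2 (X i) ≤ 1) :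
    let Z := S * X
    let m := ⨆ l : Fin n, norm2 (Zᵀ.mulVec (S.mulVec (Pi.single l (1 : ℝ))) - X l)
    let Λ := 2 - ⨅ l : Fin n, norm2 (S.mulVec (Pi.single l (1 : ℝ))) ^ 2
    ∀ i : Fin n,
      |lambdaMin ((Z - Matrix.vecMulVec (S.mulVec (Pi.single i (1 : ℝ))) (X i))ᵀ *
            (Z - Matrix.vecMulVec (S.mulVec (Pi.single i (1 : ℝ))) (X i))) -
          lambdaMin (Zᵀ * Z)| ≤ Λ + 2 * m := by
  intro Z m Λ i
  have hm : norm2 (Zᵀ *ᵥ (S *ᵥ Pi.single i (1 : ℝ)) - X i) ≤ m :=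
    le_ciSup (f := fun l : Fin n => norm2 (Zᵀ *ᵥ (S *ᵥ Pi.single l (1 : ℝ)) - X l))
      (Set.finite_range _).bddAbove i
  have hΛ : 2 - norm2 (S *ᵥ Pi.single i (1 : ℝ)) ^ 2 ≤ Λ :=
    sub_le_sub_left (ciInf_le (f := fun l : Fin n => norm2 (S *ᵥ Pi.single l (1 : ℝ)) ^ 2)
      (Set.finite_range _).bddBelow i) 2
  have hs := hS i
  have hx := hX i
  generalize S *ᵥ Pi.single i (1 : ℝ) = s at *
  generalize X i = x at *
  clear_value m Λ Z
  have hs0 : 0 ≤ 2 - norm2 s ^ 2 := by nlinarith [norm2_nonneg s]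
  have hc : 0 ≤ Λ + 2 * m := by linarith [norm2_nonneg (Zᵀ *ᵥ s - x)]
  have gram_herm : ∀ M : Matrix (Fin k) (Fin d) ℝ, (Mᵀ * M).IsHermitian := fun M => by
    simpa [conjTranspose_eq_transpose_of_trivial] using isHermitian_conjTranspose_mul_self M
  have key : ∀ v : Fin d → ℝ, |(2 - norm2 s ^ 2) * (x ⬝ᵥ v) ^ 2
      + 2 * ((Zᵀ *ᵥ s - x) ⬝ᵥ v) * (x ⬝ᵥ v)| ≤ (Λ + 2 * m) * (v ⬝ᵥ v) := by
    intro v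
    have hv := norm2_nonneg v
    have hxv : |x ⬝ᵥ v| ≤ norm2 v :=
      (abs_dotProduct_le x v).trans (mul_le_of_le_one_left hv hx)
    have hyv : |(Zᵀ *ᵥ s - x) ⬝ᵥ v| ≤ m * norm2 v :=
      (abs_dotProduct_le _ v).trans (mul_le_mul_of_nonneg_right hm hv)
    have hx2 : (x ⬝ᵥ v) ^ 2 ≤ norm2 v ^ 2 := by
      rw [← sq_abs]
      gcongr
    have h1 : (2 - norm2 s ^ 2) * (x ⬝ᵥ v) ^ 2 ≤ Λ * norm2 v ^ 2 :=
      mul_le_mul hΛ hx2 (sq_nonneg _) (hs0.trans hΛ)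
    have h2 : |(Zᵀ *ᵥ s - x) ⬝ᵥ v| * |x ⬝ᵥ v| ≤ (m * norm2 v) * norm2 v :=
      mul_le_mul hyv hxv (abs_nonneg _) ((abs_nonneg _).trans hyv)
    rw [← norm2_sq]
    refine (abs_add_le _ _).trans ?_
    rw [abs_of_nonneg (mul_nonneg hs0 (sq_nonneg _)), abs_mul, abs_mul, abs_two]
    nlinarith
  have hup := lambdaMin_le_of_form (gram_herm Z) (gram_herm (Z - vecMulVec s x)) hc fun v => by
    rw [gram_update]
    linarith [(abs_le.mp (key v)).1]
  have hlow := lambdaMin_le_of_form (gram_herm (Z - vecMulVec s x)) (gram_herm Z) hc fun v => by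
    rw [gram_update]
    linarith [(abs_le.mp (key v)).2]
  rw [abs_le]
  constructor <;> linarith
end

section
/- Optimization bound in the unbounded-row-norm regime (Appendix C.2): Let λ > 1 and let α satisfy 1 < α < λ/(2√λ − 1). Suppose s₁, s₂, c ∈ ℝ satisfy 0 ≤ s₁ ≤ 1/λ, 0 ≤ s₂ ≤ 1, c² ≤ s₁s₂, 1 + s₁ + 2c + c² − s₁s₂ > 0, and 1 + α(s₁ + 2c) + α²(c² − s₁s₂) > 0. Then 1 − 2α/√λ + α/λ > 0 and log( (1 + s₁ + 2c + c² − s₁s₂)^α / (1 + α(s₁+2c) + α²(c² − s₁s₂)) ) ≤ 2α·log(1 − 1/√λ) − log(1 − 2α/√λ + α/λ). -/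
/-!
Put `t = 1 / √lam`, so `0 < t < 1`, `s₁ ≤ t²`, and the bound on `α` reads `α * t * (2 - t) < 1`.
With `x = s₁ + 2 * c` and `d = s₁ * s₂ - c²`, the quantity to bound is
`α * log (1 + x - d) - log (1 + α * x - α² * d)`, which is nondecreasing in `d ≥ 0`
(`log_gap_mono_d`), so `s₂ = 1` is the worst case. There it equals
`2 * α * log (1 + c) - log ((1 + α * c)² - α * (α - 1) * s₁)`, which is nondecreasing in `s₁`,
so `s₁ = t²` is the worst case and the problem is to maximize `edgeGap α t c` over `|c| ≤ t`.
This function is nonincreasing on `[-t, 0]` (`edgeGap_antitoneOn`), and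
`edgeGap α t c ≤ edgeGap α t (-c)` for `0 ≤ c ≤ t` (`edgeGap_le_neg`), so its maximum is attained
at `c = -t`, where it is the claimed bound.
-/

open Set

/-- The second factor at `s₂ = 1`, `s₁ = t²`. -/
def edgeDet (α t c : ℝ) : ℝ := (1 + α * c) ^ 2 - α * (α - 1) * t ^ 2

/-- The logarithm to be bounded, restricted to `s₂ = 1`, `s₁ = t²`, as a function of `c`. -/
noncomputable def edgeGap (α t c : ℝ) : ℝ :=
  2 * α * Real.log (1 + c) - Real.log (edgeDet α t c)

lemma mul_lt_one_of_regime {α t : ℝ} (ht : 0 < t) (ht1 : t < 1)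
    (h : α * t * (2 - t) < 1) : α * t < 1 := by
  nlinarith [mul_pos ht (sub_pos.2 ht1)]

/-- Since `α * t < 1`, `edgeDet α t` increases on `[-t, ∞)` from
`edgeDet α t (-t) = 1 - α * t * (2 - t)`. -/
lemma edgeDet_pos {α t c : ℝ} (hα : 1 < α) (ht : 0 < t) (ht1 : t < 1)
    (h : α * t * (2 - t) < 1) (hc : -t ≤ c) : 0 < edgeDet α t c := by
  have h1 := mul_lt_one_of_regime ht ht1 h
  have h2 : 1 - α * t ≤ 1 + α * c := by nlinarith
  have h3 : (1 - α * t) ^ 2 ≤ (1 + α * c) ^ 2 := pow_le_pow_left₀ (by linarith) h2 2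
  unfold edgeDet
  nlinarith

/-- The sign of the derivative in `d` is that of
`α * (1 + x - d) - (1 + α * x - α² * d) = (α - 1) * (1 + α * d)`, which is positive. -/
lemma log_gap_mono_d {α x d₀ d₁ : ℝ} (hα : 1 < α) (h0 : 0 ≤ d₀) (h01 : d₀ ≤ d₁)
    (hP : 0 < 1 + x - d₁) (hQ : 0 < 1 + α * x - α ^ 2 * d₁) :
    α * Real.log (1 + x - d₀) - Real.log (1 + α * x - α ^ 2 * d₀) ≤
      α * Real.log (1 + x - d₁) - Real.log (1 + α * x - α ^ 2 * d₁) := by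
  have pos : ∀ d ∈ Icc d₀ d₁, 0 < 1 + x - d ∧ 0 < 1 + α * x - α ^ 2 * d := by
    intro d hd
    have := mul_le_mul_of_nonneg_left hd.2 (sq_nonneg α)
    exact ⟨by linarith [hd.2], by linarith⟩
  have der : ∀ d ∈ Icc d₀ d₁, HasDerivAt
      (fun d => α * Real.log (1 + x - d) - Real.log (1 + α * x - α ^ 2 * d))
      (α * (-1 / (1 + x - d)) - (-(α ^ 2 * 1)) / (1 + α * x - α ^ 2 * d)) d := by
    intro d hd
    obtain ⟨hp, hq⟩ := pos d hd
    exact ((((hasDerivAt_id d).const_sub (1 + x)).log hp.ne').const_mul α).sub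
      ((((hasDerivAt_id d).const_mul (α ^ 2)).const_sub (1 + α * x)).log hq.ne')
  refine monotoneOn_of_hasDerivWithinAt_nonneg (convex_Icc d₀ d₁)
    (fun d hd => (der d hd).continuousAt.continuousWithinAt)
    (fun d hd => (der d (interior_subset hd)).hasDerivWithinAt) ?_
    (left_mem_Icc.2 h01) (right_mem_Icc.2 h01) h01
  intro d hd
  have hd' := interior_subset hd
  obtain ⟨hp, hq⟩ := pos d hd'
  have hd0 : 0 ≤ d := h0.trans hd'.1
  have e : α * (-1 / (1 + x - d)) - (-(α ^ 2 * 1)) / (1 + α * x - α ^ 2 * d) =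
      α * ((α - 1) * (1 + α * d)) / ((1 + x - d) * (1 + α * x - α ^ 2 * d)) := by
    field_simp
    ring
  rw [e]
  have : 0 < α - 1 := by linarith
  positivity

lemma hasDerivAt_edgeGap {α t c : ℝ} (hc : 0 < 1 + c) (hD : 0 < edgeDet α t c) :
    HasDerivAt (edgeGap α t)
      (2 * α * (α - 1) * ((c - α * (t ^ 2 - c ^ 2)) / ((1 + c) * edgeDet α t c))) c := by
  have h1 : HasDerivAt (fun c => edgeDet α t c) (2 * (1 + α * c) * α) c := by
    unfold edgeDet
    have := ((((hasDerivAt_id c).const_mul α).const_add 1).pow 2).sub_const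
      (α * (α - 1) * t ^ 2)
    refine this.congr_deriv ?_
    simp
  have h2 := ((((hasDerivAt_id c).const_add 1).log hc.ne').const_mul (2 * α)).sub
    (h1.log hD.ne')
  refine h2.congr_deriv ?_
  simp only [id_eq]
  field_simp
  unfold edgeDet
  ring

lemma edgeGap_antitoneOn {α t : ℝ} (hα : 1 < α) (ht : 0 < t) (ht1 : t < 1)
    (h : α * t * (2 - t) < 1) : AntitoneOn (edgeGap α t) (Icc (-t) 0) := by
  have der : ∀ c ∈ Icc (-t) 0, HasDerivAt (edgeGap α t) _ c := fun c hc =>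
    hasDerivAt_edgeGap (by linarith [hc.1]) (edgeDet_pos hα ht ht1 h hc.1)
  refine antitoneOn_of_hasDerivWithinAt_nonpos (convex_Icc _ _)
    (fun c hc => (der c hc).continuousAt.continuousWithinAt)
    (fun c hc => (der c (interior_subset hc)).hasDerivWithinAt) ?_
  intro c hc
  obtain ⟨hl, hr⟩ := interior_subset hc
  have hD := edgeDet_pos hα ht ht1 h hl
  have hc1 : 0 < 1 + c := by linarith
  have hm : 0 ≤ t ^ 2 - c ^ 2 := by nlinarith
  have ha : 0 < α - 1 := by linarith
  refine mul_nonpos_of_nonneg_of_nonpos (by positivity)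
    (div_nonpos_of_nonpos_of_nonneg ?_ (by positivity))
  nlinarith

/-- The two sides agree at `c = 0`, and `edgeGap α t c - edgeGap α t (-c)` is nonincreasing:
its derivative compares fractions whose numerators satisfy
`c - α * (t² - c²) ≤ c + α * (t² - c²)` and whose denominators are ordered the other way. -/
lemma edgeGap_le_neg {α t c : ℝ} (hα : 1 < α) (ht : 0 < t) (ht1 : t < 1)
    (h : α * t * (2 - t) < 1) (hc0 : 0 ≤ c) (hct : c ≤ t) :
    edgeGap α t c ≤ edgeGap α t (-c) := by
  have der : ∀ c ∈ Icc 0 t, HasDerivAt (fun c => edgeGap α t c - edgeGap α t (-c)) _ c :=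
    fun c hc =>
    (hasDerivAt_edgeGap (by linarith [hc.1]) (edgeDet_pos hα ht ht1 h (by linarith [hc.1]))).sub
      ((hasDerivAt_edgeGap (c := -c) (by linarith [hc.2])
        (edgeDet_pos hα ht ht1 h (by linarith [hc.2]))).comp c (hasDerivAt_neg c))
  have anti : AntitoneOn (fun c => edgeGap α t c - edgeGap α t (-c)) (Icc 0 t) := by
    refine antitoneOn_of_hasDerivWithinAt_nonpos (convex_Icc _ _)
      (fun c hc => (der c hc).continuousAt.continuousWithinAt)
      (fun c hc => (der c (interior_subset hc)).hasDerivWithinAt) ?_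
    intro c hc
    obtain ⟨hl, hr⟩ := interior_subset hc
    have hD1 := edgeDet_pos hα ht ht1 h (by linarith : -t ≤ c)
    have hD2 := edgeDet_pos hα ht ht1 h (by linarith : -t ≤ -c)
    have hc1 : 0 < 1 + -c := by linarith
    have hm : 0 ≤ t ^ 2 - c ^ 2 := by nlinarith
    have ha : 0 < α - 1 := by linarith
    have hDle : edgeDet α t (-c) ≤ edgeDet α t c := by
      unfold edgeDet
      nlinarith [mul_nonneg (by linarith : 0 ≤ α) hl]
    have hαm : 0 ≤ α * (t ^ 2 - c ^ 2) := by positivity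
    have key : (c - α * (t ^ 2 - c ^ 2)) / ((1 + c) * edgeDet α t c) ≤
        (c + α * (t ^ 2 - c ^ 2)) / ((1 + -c) * edgeDet α t (-c)) :=
      div_le_div₀ (by positivity) (by linarith) (by positivity)
        (mul_le_mul (by linarith) hDle hD2.le (by linarith))
    have e : (-c - α * (t ^ 2 - (-c) ^ 2)) / ((1 + -c) * edgeDet α t (-c)) =
        -((c + α * (t ^ 2 - c ^ 2)) / ((1 + -c) * edgeDet α t (-c))) := by
      rw [← neg_div]
      congr 1
      ring
    have hk : 0 ≤ 2 * α * (α - 1) := by positivity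
    rw [e]
    linarith [mul_le_mul_of_nonneg_left key hk]
  have := anti (left_mem_Icc.2 ht.le) ⟨hc0, hct⟩ hc0
  simp only [neg_zero, sub_self] at this
  linarith

lemma edgeGap_le {α t c : ℝ} (hα : 1 < α) (ht : 0 < t) (ht1 : t < 1)
    (h : α * t * (2 - t) < 1) (hl : -t ≤ c) (hr : c ≤ t) :
    edgeGap α t c ≤ edgeGap α t (-t) := by
  have anti := edgeGap_antitoneOn hα ht ht1 h
  have hmem : -t ∈ Icc (-t) 0 := ⟨le_rfl, by linarith⟩
  rcases le_total c 0 with h0 | h0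
  · exact anti hmem ⟨hl, h0⟩ hl
  · exact (edgeGap_le_neg hα ht ht1 h h0 hr).trans
      (anti hmem ⟨by linarith, by linarith⟩ (by linarith))

theorem stmt11 (lam α s₁ s₂ c : ℝ) (hlam : 1 < lam)
    (hα1 : 1 < α) (hα2 : α < lam / (2 * Real.sqrt lam - 1))
    (hs₁0 : 0 ≤ s₁) (hs₁ : s₁ ≤ 1 / lam) (hs₂0 : 0 ≤ s₂) (hs₂ : s₂ ≤ 1)
    (hc : c ^ 2 ≤ s₁ * s₂)
    (hpos1 : 0 < 1 + s₁ + 2 * c + c ^ 2 - s₁ * s₂)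
    (hpos2 : 0 < 1 + α * (s₁ + 2 * c) + α ^ 2 * (c ^ 2 - s₁ * s₂)) :
    0 < 1 - 2 * α / Real.sqrt lam + α / lam ∧
    Real.log ((1 + s₁ + 2 * c + c ^ 2 - s₁ * s₂) ^ α /
        (1 + α * (s₁ + 2 * c) + α ^ 2 * (c ^ 2 - s₁ * s₂))) ≤
      2 * α * Real.log (1 - 1 / Real.sqrt lam) -
        Real.log (1 - 2 * α / Real.sqrt lam + α / lam) := by
  obtain ⟨r, hr⟩ : ∃ r, r = Real.sqrt lam := ⟨_, rfl⟩
  have hr1 : 1 < r := by rw [hr]; exact Real.lt_sqrt_of_sq_lt (by linarith)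
  have hlr : lam = r ^ 2 := by rw [hr, Real.sq_sqrt (by linarith)]
  rw [← hr] at hα2 ⊢
  rw [hlr] at hα2 hs₁ ⊢
  clear hlr hr hlam
  obtain ⟨t, ht⟩ : ∃ t, t = 1 / r := ⟨_, rfl⟩
  have hr0 : 0 < r := by linarith
  have ht0 : 0 < t := by rw [ht]; positivity
  have ht1 : t < 1 := by rw [ht, div_lt_one hr0]; exact hr1
  have hreg : α * t * (2 - t) < 1 := by
    rw [lt_div_iff₀ (by linarith)] at hα2
    have : α * t * (2 - t) = α * (2 * r - 1) / r ^ 2 := by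
      rw [ht]; field_simp
    rw [this, div_lt_one (by positivity)]
    exact hα2
  have hst : s₁ ≤ t ^ 2 := by rw [ht, div_pow, one_pow]; exact hs₁
  have hD : 1 - 2 * α / r + α / r ^ 2 = edgeDet α t (-t) := by
    unfold edgeDet; rw [ht]; field_simp; ring
  rw [hD, ← ht]
  refine ⟨edgeDet_pos hα1 ht0 ht1 hreg le_rfl, ?_⟩
  have hss : s₁ * s₂ ≤ s₁ := mul_le_of_le_one_right hs₁0 hs₂
  have habs : |c| ≤ t := abs_le_of_sq_le_sq (by linarith) ht0.le
  obtain ⟨hcl, hcr⟩ := abs_le.1 habs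
  have hE := edgeDet_pos hα1 ht0 ht1 hreg hcl
  have hQle : edgeDet α t c ≤ 1 + α * (s₁ + 2 * c) - α ^ 2 * (s₁ - c ^ 2) := by
    unfold edgeDet
    nlinarith [mul_nonneg (mul_nonneg (by linarith : 0 ≤ α) (by linarith : 0 ≤ α - 1))
      (sub_nonneg.2 hst)]
  have hP : 1 + (s₁ + 2 * c) - (s₁ - c ^ 2) = (1 + c) ^ 2 := by ring
  have step := log_gap_mono_d (x := s₁ + 2 * c) (d₀ := s₁ * s₂ - c ^ 2) (d₁ := s₁ - c ^ 2)
    hα1 (by linarith) (by linarith) (by rw [hP]; exact pow_pos (by linarith) 2)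
    (hE.trans_le hQle)
  rw [hP, Real.log_pow] at step
  have hlog := Real.log_le_log hE hQle
  have fin := edgeGap_le hα1 ht0 ht1 hreg hcl hcr
  unfold edgeGap at fin
  rw [← sub_eq_add_neg 1 t] at fin
  rw [Real.log_div (Real.rpow_pos_of_pos hpos1 α).ne' hpos2.ne', Real.log_rpow hpos1,
    show 1 + s₁ + 2 * c + c ^ 2 - s₁ * s₂ = 1 + (s₁ + 2 * c) - (s₁ * s₂ - c ^ 2) by ring,
    show 1 + α * (s₁ + 2 * c) + α ^ 2 * (c ^ 2 - s₁ * s₂) =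
      1 + α * (s₁ + 2 * c) - α ^ 2 * (s₁ * s₂ - c ^ 2) by ring]
  push_cast at step
  linarith
end
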